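/- Type-and-effect preservation of the CBV translation: if Γ ⊢ e :^φ τ in the CBV λ-calculus with effects, then ⟦Γ⟧v ⊢ ⟦e⟧v :^φ F ⟦τ⟧v in CBPV with effects. -/

import Mathlib

set_option autoImplicit false

/-- A preordered monoid of effects `(E, ·, ⊥, ≤eff)`, with a distinguished `tock` effect. -/
structure EffSig (E : Type) where
  op : E → E → E
  bot : E
  tock : E
  le : E → E → Prop
  op_assoc : ∀ a b c, op (op a b) c = op a (op b c)
  bot_op : ∀ a, op bot a = a
  op_bot : ∀ a, op a bot = a
  le_refl : ∀ a, le a a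
  le_trans : ∀ a b c, le a b → le b c → le a c
  le_op : ∀ a b c d, le a b → le c d → le (op a c) (op b d)

namespace CBPVEff

mutual
/-- CBPV value types: `unit`, graded thunks `U_φ B`, positive products, sums. -/
inductive VTy (E : Type) : Type where
  | unit : VTy E
  | thunk : E → CTy E → VTy E
  | prod : VTy E → VTy E → VTy E
  | sum : VTy E → VTy E → VTy E
/-- CBPV computation types: functions, returners `F A`, negative products. -/
inductive CTy (E : Type) : Type where
  | arr : VTy E → CTy E → CTy E
  | F : VTy E → CTy E
  | wth : CTy E → CTy E → CTy E
end

mutual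
/-- CBPV values (de Bruijn indices for variables). -/
inductive Val : Type where
  | var : Nat → Val
  | unit : Val
  | thunk : Comp → Val
  | pair : Val → Val → Val
  | inl : Val → Val
  | inr : Val → Val
/-- CBPV computations. -/
inductive Comp : Type where
  | lam : Comp → Comp
  | app : Comp → Val → Comp
  | force : Val → Comp
  | split : Val → Comp → Comp
  | cpair : Comp → Comp → Comp
  | fst : Comp → Comp
  | snd : Comp → Comp
  | ret : Val → Comp
  | letin : Comp → Comp → Comp
  | seq : Val → Comp → Comp
  | case : Val → Comp → Comp → Comp
  | tick : Comp
end

mutual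
/-- The value typing judgment `Γ ⊢ V : A` of the CBPV type-and-effect system. -/
inductive VHasTy {E : Type} (S : EffSig E) : List (VTy E) → Val → VTy E → Prop where
  | var : ∀ {Γ : List (VTy E)} {x : Nat} {A : VTy E},
      Γ[x]? = some A → VHasTy S Γ (.var x) A
  | unit : ∀ {Γ : List (VTy E)}, VHasTy S Γ .unit .unit
  | thunk : ∀ {Γ : List (VTy E)} {M : Comp} {φ : E} {B : CTy E},
      CHasTy S Γ M φ B → VHasTy S Γ (.thunk M) (.thunk φ B)
  | pair : ∀ {Γ : List (VTy E)} {V₁ V₂ : Val} {A₁ A₂ : VTy E},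
      VHasTy S Γ V₁ A₁ → VHasTy S Γ V₂ A₂ → VHasTy S Γ (.pair V₁ V₂) (.prod A₁ A₂)
  | inl : ∀ {Γ : List (VTy E)} {V : Val} {A₁ A₂ : VTy E},
      VHasTy S Γ V A₁ → VHasTy S Γ (.inl V) (.sum A₁ A₂)
  | inr : ∀ {Γ : List (VTy E)} {V : Val} {A₁ A₂ : VTy E},
      VHasTy S Γ V A₂ → VHasTy S Γ (.inr V) (.sum A₁ A₂)

/-- The computation typing judgment `Γ ⊢ M :^φ B` of the CBPV type-and-effect system. -/
inductive CHasTy {E : Type} (S : EffSig E) : List (VTy E) → Comp → E → CTy E → Prop where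
  | tick : ∀ {Γ : List (VTy E)} {φ : E}, S.le S.tock φ → CHasTy S Γ .tick φ (.F .unit)
  | lam : ∀ {Γ : List (VTy E)} {A : VTy E} {M : Comp} {φ : E} {B : CTy E},
      CHasTy S (A :: Γ) M φ B → CHasTy S Γ (.lam M) φ (.arr A B)
  | app : ∀ {Γ : List (VTy E)} {M : Comp} {V : Val} {A : VTy E} {φ : E} {B : CTy E},
      CHasTy S Γ M φ (.arr A B) → VHasTy S Γ V A → CHasTy S Γ (.app M V) φ B
  | force : ∀ {Γ : List (VTy E)} {V : Val} {φ' φ : E} {B : CTy E},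
      VHasTy S Γ V (.thunk φ' B) → S.le φ' φ → CHasTy S Γ (.force V) φ B
  | ret : ∀ {Γ : List (VTy E)} {V : Val} {A : VTy E} {φ : E},
      VHasTy S Γ V A → S.le S.bot φ → CHasTy S Γ (.ret V) φ (.F A)
  | letin : ∀ {Γ : List (VTy E)} {M N : Comp} {A : VTy E} {φ₁ φ₂ φ : E} {B : CTy E},
      CHasTy S Γ M φ₁ (.F A) → CHasTy S (A :: Γ) N φ₂ B →
      S.le (S.op φ₁ φ₂) φ → CHasTy S Γ (.letin M N) φ B
  | split : ∀ {Γ : List (VTy E)} {V : Val} {A₁ A₂ : VTy E} {N : Comp} {φ : E} {B : CTy E},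
      VHasTy S Γ V (.prod A₁ A₂) → CHasTy S (A₂ :: A₁ :: Γ) N φ B →
      CHasTy S Γ (.split V N) φ B
  | cpair : ∀ {Γ : List (VTy E)} {M₁ M₂ : Comp} {φ : E} {B₁ B₂ : CTy E},
      CHasTy S Γ M₁ φ B₁ → CHasTy S Γ M₂ φ B₂ → CHasTy S Γ (.cpair M₁ M₂) φ (.wth B₁ B₂)
  | fst : ∀ {Γ : List (VTy E)} {M : Comp} {φ : E} {B₁ B₂ : CTy E},
      CHasTy S Γ M φ (.wth B₁ B₂) → CHasTy S Γ (.fst M) φ B₁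
  | snd : ∀ {Γ : List (VTy E)} {M : Comp} {φ : E} {B₁ B₂ : CTy E},
      CHasTy S Γ M φ (.wth B₁ B₂) → CHasTy S Γ (.snd M) φ B₂
  | seq : ∀ {Γ : List (VTy E)} {V : Val} {M : Comp} {φ : E} {B : CTy E},
      VHasTy S Γ V .unit → CHasTy S Γ M φ B → CHasTy S Γ (.seq V M) φ B
  | case : ∀ {Γ : List (VTy E)} {V : Val} {A₁ A₂ : VTy E} {M₁ M₂ : Comp} {φ : E} {B : CTy E},
      VHasTy S Γ V (.sum A₁ A₂) → CHasTy S (A₁ :: Γ) M₁ φ B →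
      CHasTy S (A₂ :: Γ) M₂ φ B → CHasTy S Γ (.case V M₁ M₂) φ B
end

/-- Lifting a de Bruijn renaming under one binder. -/
def liftRen (f : Nat → Nat) : Nat → Nat
  | 0 => 0
  | n + 1 => f n + 1

mutual
/-- Renaming of values. -/
def Val.rename : Val → (Nat → Nat) → Val
  | .var x, f => .var (f x)
  | .unit, _ => .unit
  | .thunk M, f => .thunk (M.rename f)
  | .pair V₁ V₂, f => .pair (V₁.rename f) (V₂.rename f)
  | .inl V, f => .inl (V.rename f)
  | .inr V, f => .inr (V.rename f)
/-- Renaming of computations. -/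
def Comp.rename : Comp → (Nat → Nat) → Comp
  | .lam M, f => .lam (M.rename (liftRen f))
  | .app M V, f => .app (M.rename f) (V.rename f)
  | .force V, f => .force (V.rename f)
  | .split V N, f => .split (V.rename f) (N.rename (liftRen (liftRen f)))
  | .cpair M₁ M₂, f => .cpair (M₁.rename f) (M₂.rename f)
  | .fst M, f => .fst (M.rename f)
  | .snd M, f => .snd (M.rename f)
  | .ret V, f => .ret (V.rename f)
  | .letin M N, f => .letin (M.rename f) (N.rename (liftRen f))
  | .seq V M, f => .seq (V.rename f) (M.rename f)
  | .case V M₁ M₂, f => .case (V.rename f) (M₁.rename (liftRen f)) (M₂.rename (liftRen f))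
  | .tick, _ => .tick
end

/-- Weakening: shift all free variables up by one. -/
def shift (M : Comp) : Comp := M.rename Nat.succ

/-- Weakening under one binder: shift all free variables except index 0 up by one. -/
def shift1 (M : Comp) : Comp := M.rename (liftRen Nat.succ)

/-- Weakening under two binders. -/
def shift2 (M : Comp) : Comp := M.rename (liftRen (liftRen Nat.succ))

end CBPVEff

namespace LamEff

/-- Types of the CBV λ-calculus with effects; function types carry a latent effect. -/
inductive Ty (E : Type) : Type where
  | unit : Ty E
  | arr : Ty E → E → Ty E → Ty E
  | tensor : Ty E → Ty E → Ty E
  | sum : Ty E → Ty E → Ty E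

/-- Terms of the CBV λ-calculus with effects (de Bruijn indices). -/
inductive Tm : Type where
  | tick : Tm
  | var : Nat → Tm
  | lam : Tm → Tm
  | app : Tm → Tm → Tm
  | unit : Tm
  | seq : Tm → Tm → Tm
  | pair : Tm → Tm → Tm
  | split : Tm → Tm → Tm
  | inl : Tm → Tm
  | inr : Tm → Tm
  | case : Tm → Tm → Tm → Tm

/-- The type-and-effect judgment `Γ ⊢ e :^φ τ` of the source CBV λ-calculus. -/
inductive HasTy {E : Type} (S : EffSig E) : List (Ty E) → Tm → E → Ty E → Prop where
  | tick : ∀ {Γ : List (Ty E)} {φ : E}, S.le S.tock φ → HasTy S Γ .tick φ .unit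
  | var : ∀ {Γ : List (Ty E)} {x : Nat} {τ : Ty E} {φ : E},
      Γ[x]? = some τ → S.le S.bot φ → HasTy S Γ (.var x) φ τ
  | lam : ∀ {Γ : List (Ty E)} {e : Tm} {τ₁ τ₂ : Ty E} {φ' φ : E},
      HasTy S (τ₁ :: Γ) e φ' τ₂ → S.le S.bot φ → HasTy S Γ (.lam e) φ (.arr τ₁ φ' τ₂)
  | app : ∀ {Γ : List (Ty E)} {e₁ e₂ : Tm} {τ₁ τ₂ : Ty E} {φ₁ φ₂ φ₃ φ : E},
      HasTy S Γ e₁ φ₁ (.arr τ₁ φ₃ τ₂) → HasTy S Γ e₂ φ₂ τ₁ →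
      S.le (S.op (S.op φ₁ φ₂) φ₃) φ → HasTy S Γ (.app e₁ e₂) φ τ₂
  | unit : ∀ {Γ : List (Ty E)} {φ : E}, S.le S.bot φ → HasTy S Γ .unit φ .unit
  | seq : ∀ {Γ : List (Ty E)} {e₁ e₂ : Tm} {τ : Ty E} {φ₁ φ₂ φ : E},
      HasTy S Γ e₁ φ₁ .unit → HasTy S Γ e₂ φ₂ τ → S.le (S.op φ₁ φ₂) φ →
      HasTy S Γ (.seq e₁ e₂) φ τ
  | pair : ∀ {Γ : List (Ty E)} {e₁ e₂ : Tm} {τ₁ τ₂ : Ty E} {φ₁ φ₂ φ : E},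
      HasTy S Γ e₁ φ₁ τ₁ → HasTy S Γ e₂ φ₂ τ₂ → S.le (S.op φ₁ φ₂) φ →
      HasTy S Γ (.pair e₁ e₂) φ (.tensor τ₁ τ₂)
  | split : ∀ {Γ : List (Ty E)} {e₁ e₂ : Tm} {τ₁ τ₂ τ : Ty E} {φ₁ φ₂ φ : E},
      HasTy S Γ e₁ φ₁ (.tensor τ₁ τ₂) → HasTy S (τ₂ :: τ₁ :: Γ) e₂ φ₂ τ →
      S.le (S.op φ₁ φ₂) φ → HasTy S Γ (.split e₁ e₂) φ τ
  | inl : ∀ {Γ : List (Ty E)} {e : Tm} {τ₁ τ₂ : Ty E} {φ₁ φ : E},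
      HasTy S Γ e φ₁ τ₁ → S.le φ₁ φ → HasTy S Γ (.inl e) φ (.sum τ₁ τ₂)
  | inr : ∀ {Γ : List (Ty E)} {e : Tm} {τ₁ τ₂ : Ty E} {φ₁ φ : E},
      HasTy S Γ e φ₁ τ₂ → S.le φ₁ φ → HasTy S Γ (.inr e) φ (.sum τ₁ τ₂)
  | case : ∀ {Γ : List (Ty E)} {e e₁ e₂ : Tm} {τ₁ τ₂ τ : Ty E} {φ₁ φ₂ φ : E},
      HasTy S Γ e φ₁ (.sum τ₁ τ₂) → HasTy S (τ₁ :: Γ) e₁ φ₂ τ →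
      HasTy S (τ₂ :: Γ) e₂ φ₂ τ → S.le (S.op φ₁ φ₂) φ →
      HasTy S Γ (.case e e₁ e₂) φ τ

end LamEff

open CBPVEff LamEff

/-- CBV translation of source types into CBPV value types. -/
def tyTransV {E : Type} : Ty E → VTy E
  | .unit => .unit
  | .arr τ₁ φ τ₂ => .thunk φ (.arr (tyTransV τ₁) (.F (tyTransV τ₂)))
  | .tensor τ₁ τ₂ => .prod (tyTransV τ₁) (tyTransV τ₂)
  | .sum τ₁ τ₂ => .sum (tyTransV τ₁) (tyTransV τ₂)

/-- Levy's CBV translation of source terms into CBPV computations. -/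
def tmTransV : Tm → Comp
  | .tick => .tick
  | .var x => .ret (.var x)
  | .lam e => .ret (.thunk (.lam (tmTransV e)))
  | .app e₁ e₂ =>
      .letin (tmTransV e₁) (.letin (shift (tmTransV e₂)) (.app (.force (.var 1)) (.var 0)))
  | .unit => .ret .unit
  | .seq e₁ e₂ => .letin (tmTransV e₁) (.seq (.var 0) (shift (tmTransV e₂)))
  | .pair e₁ e₂ =>
      .letin (tmTransV e₁) (.letin (shift (tmTransV e₂)) (.ret (.pair (.var 1) (.var 0))))
  | .split e₁ e₂ => .letin (tmTransV e₁) (.split (.var 0) (shift2 (tmTransV e₂)))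
  | .inl e => .letin (tmTransV e) (.ret (.inl (.var 0)))
  | .inr e => .letin (tmTransV e) (.ret (.inr (.var 0)))
  | .case e e₁ e₂ =>
      .letin (tmTransV e) (.case (.var 0) (shift1 (tmTransV e₁)) (shift1 (tmTransV e₂)))

/-- `f` maps variables of `Γ` to variables of `Δ` with the same type. -/
def RenOK {E : Type} (f : Nat → Nat) (Γ Δ : List (VTy E)) : Prop :=
  ∀ x A, Γ[x]? = some A → Δ[f x]? = some A

theorem RenOK.lift {E : Type} {f : Nat → Nat} {Γ Δ : List (VTy E)} (h : RenOK f Γ Δ)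
    (A : VTy E) : RenOK (liftRen f) (A :: Γ) (A :: Δ) := by
  intro x B hx
  cases x with
  | zero => simpa [liftRen] using hx
  | succ n => simpa [liftRen] using h n B (by simpa using hx)

theorem RenOK.succ {E : Type} (Γ : List (VTy E)) (A : VTy E) : RenOK Nat.succ Γ (A :: Γ) := by
  intro x B hx
  simpa using hx

mutual
theorem vren {E : Type} {S : EffSig E} {Γ : List (VTy E)} {V : Val} {A : VTy E}
    (h : VHasTy S Γ V A) (f : Nat → Nat) (Δ : List (VTy E)) (hf : RenOK f Γ Δ) :
    VHasTy S Δ (V.rename f) A := by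
  cases h with
  | var hx => rw [Val.rename]; exact .var (hf _ _ hx)
  | unit => rw [Val.rename]; exact .unit
  | thunk h => rw [Val.rename]; exact .thunk (cren h f Δ hf)
  | pair h₁ h₂ => rw [Val.rename]; exact .pair (vren h₁ f Δ hf) (vren h₂ f Δ hf)
  | inl h => rw [Val.rename]; exact .inl (vren h f Δ hf)
  | inr h => rw [Val.rename]; exact .inr (vren h f Δ hf)
termination_by sizeOf V

theorem cren {E : Type} {S : EffSig E} {Γ : List (VTy E)} {M : Comp} {φ : E} {B : CTy E}
    (h : CHasTy S Γ M φ B) (f : Nat → Nat) (Δ : List (VTy E)) (hf : RenOK f Γ Δ) :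
    CHasTy S Δ (M.rename f) φ B := by
  cases h with
  | tick h => rw [Comp.rename]; exact .tick h
  | lam h => rw [Comp.rename]; exact .lam (cren h _ _ (hf.lift _))
  | app h₁ h₂ => rw [Comp.rename]; exact .app (cren h₁ f Δ hf) (vren h₂ f Δ hf)
  | force h₁ h₂ => rw [Comp.rename]; exact .force (vren h₁ f Δ hf) h₂
  | ret h₁ h₂ => rw [Comp.rename]; exact .ret (vren h₁ f Δ hf) h₂
  | letin h₁ h₂ h₃ =>
    rw [Comp.rename]; exact .letin (cren h₁ f Δ hf) (cren h₂ _ _ (hf.lift _)) h₃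
  | split h₁ h₂ =>
    rw [Comp.rename]; exact .split (vren h₁ f Δ hf) (cren h₂ _ _ ((hf.lift _).lift _))
  | cpair h₁ h₂ => rw [Comp.rename]; exact .cpair (cren h₁ f Δ hf) (cren h₂ f Δ hf)
  | fst h => rw [Comp.rename]; exact .fst (cren h f Δ hf)
  | snd h => rw [Comp.rename]; exact .snd (cren h f Δ hf)
  | seq h₁ h₂ => rw [Comp.rename]; exact .seq (vren h₁ f Δ hf) (cren h₂ f Δ hf)
  | case h₁ h₂ h₃ =>
    rw [Comp.rename]
    exact .case (vren h₁ f Δ hf) (cren h₂ _ _ (hf.lift _)) (cren h₃ _ _ (hf.lift _))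
termination_by sizeOf M
end

/-- Type-and-effect preservation of the CBV translation:
if `Γ ⊢ e :^φ τ` in the CBV λ-calculus with effects, then
`⟦Γ⟧v ⊢ ⟦e⟧v :^φ F ⟦τ⟧v` in CBPV with effects. -/
theorem cbv_translation_preservation {E : Type} (S : EffSig E) {Γ : List (Ty E)}
    {e : Tm} {φ : E} {τ : Ty E} (h : LamEff.HasTy S Γ e φ τ) :
    CHasTy S (Γ.map tyTransV) (tmTransV e) φ (.F (tyTransV τ)) := by
  induction h with
  | tick h => exact .tick h
  | var hx h => exact .ret (.var (by simp [hx])) h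
  | lam _ h ih => exact .ret (.thunk (.lam ih)) h
  | app _ _ h ih₁ ih₂ =>
    refine .letin ih₁ (.letin (cren ih₂ _ _ (RenOK.succ _ _))
      (.app (.force (.var rfl) (S.le_refl _)) (.var rfl)) (S.le_refl _)) ?_
    rw [← S.op_assoc]; exact h
  | unit h => exact .ret .unit h
  | seq _ _ h ih₁ ih₂ =>
    exact .letin ih₁ (.seq (.var rfl) (cren ih₂ _ _ (RenOK.succ _ _))) h
  | pair _ _ h ih₁ ih₂ =>
    refine .letin ih₁ (.letin (cren ih₂ _ _ (RenOK.succ _ _))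
      (.ret (.pair (.var rfl) (.var rfl)) (S.le_refl _)) (S.le_refl _)) ?_
    rw [S.op_bot]; exact h
  | split _ _ h ih₁ ih₂ =>
    exact .letin ih₁ (.split (.var rfl) (cren ih₂ _ _ (((RenOK.succ _ _).lift _).lift _))) h
  | inl _ h ih =>
    refine .letin ih (.ret (.inl (.var rfl)) (S.le_refl _)) ?_
    rw [S.op_bot]; exact h
  | inr _ h ih =>
    refine .letin ih (.ret (.inr (.var rfl)) (S.le_refl _)) ?_
    rw [S.op_bot]; exact h
  | case _ _ _ h ih ih₁ ih₂ =>
    exact .letin ih (.case (.var rfl) (cren ih₁ _ _ ((RenOK.succ _ _).lift _))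
      (cren ih₂ _ _ ((RenOK.succ _ _).lift _))) h
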